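/- Subadditive expectation bound: for dimension d ≥ 1, every k ≥ 1, every λ > 0, and all 0 < s ≤ t, one has E[F_{k,λ}(t)] ≤ ⌈t/s⌉^d · E[F_{k,λ}(s)]. -/

import Mathlib

open MeasureTheory ProbabilityTheory Filter

noncomputable instance instDecEqEuclidean (d : ℕ) :
    DecidableEq (EuclideanSpace ℝ (Fin d)) := Classical.decEq _

/-- `maxColorable d k r V` is the maximum number of vertices of the geometric
graph `G_r(V)` (edges between distinct points of `V` at Euclidean distance at
most `r`) that can be properly colored with `k` colors, i.e. the maximum
cardinality of a subset `S ⊆ V` admitting a proper `k`-coloring. -/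
noncomputable def maxColorable (d k : ℕ) (r : ℝ)
    (V : Finset (EuclideanSpace ℝ (Fin d))) : ℕ :=
  sSup {m : ℕ | ∃ S : Finset (EuclideanSpace ℝ (Fin d)), S ⊆ V ∧ S.card = m ∧
    ∃ c : EuclideanSpace ℝ (Fin d) → Fin k,
      ∀ u ∈ S, ∀ v ∈ S, u ≠ v → dist u v ≤ r → c u ≠ c v}

/-- The unit cube `[0,1]^d`. -/
def unitCube (d : ℕ) : Set (EuclideanSpace ℝ (Fin d)) :=
  {x | ∀ i, x i ∈ Set.Icc (0 : ℝ) 1}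

/-- The uniform distribution on the unit cube `[0,1]^d` (Lebesgue measure
restricted to the cube, which has total mass one). -/
noncomputable def uniformCube (d : ℕ) : Measure (EuclideanSpace ℝ (Fin d)) :=
  volume.restrict (unitCube d)

/-- `EH d k r n = E[H_{k,r}(n)] = E[N_{k,r}({X_1,…,X_n})]` for `X_1,…,X_n`
i.i.d. uniform on the unit cube `[0,1]^d`. -/
noncomputable def EH (d k : ℕ) (r : ℝ) (n : ℕ) : ℝ :=
  ∫ x : Fin n → EuclideanSpace ℝ (Fin d),
    (maxColorable d k r (Finset.image x Finset.univ) : ℝ)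
    ∂(Measure.pi fun _ => uniformCube d)

/-- `EF d k lam t = E[F_{k,lam}(t)] = ∑_n P(Po(lam t^d) = n) E[H_{k,1/t}(n)]`,
the expected maximum number of `k`-colorable vertices of the unit-distance
geometric graph on a Poisson process of intensity `lam` in `[0,t]^d`. -/
noncomputable def EF (d k : ℕ) (lam t : ℝ) : ℝ :=
  ∑' n : ℕ, poissonPMFReal (Real.toNNReal (lam * t ^ d)) n * EH d k (1 / t) n

/-- The normalized expectation `\bar F_{k,lam}(t) = E[F_{k,lam}(t)]/(lam t^d)`. -/
noncomputable def Fbar (d k : ℕ) (lam t : ℝ) : ℝ :=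
  EF d k lam t / (lam * t ^ d)

/-- The constant `a_{k,lam} = inf_{t>0} \bar F_{k,lam}(t)`. -/
noncomputable def aConst (d k : ℕ) (lam : ℝ) : ℝ :=
  sInf {x : ℝ | ∃ t : ℝ, 0 < t ∧ x = Fbar d k lam t}

/-- The volume `V_d(r) = π^{d/2} r^d / Γ(d/2 + 1)` of the `d`-dimensional
Euclidean ball of radius `r`. -/
noncomputable def ballVol (d : ℕ) (r : ℝ) : ℝ :=
  Real.pi ^ ((d : ℝ) / 2) * r ^ d / Real.Gamma ((d : ℝ) / 2 + 1)

/-!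
Work with a Poisson process of intensity `λ` on all of space and radius `1`, and let `Φ(A)` be the
expected maximum number of `k`-colorable vertices among the points in `A`; rescaling by `t` gives
`E[F_{k,λ}(t)] = Φ([0,t]^d)`. A colorable set of points in a union of regions splits into
colorable sets in the individual regions, and restricting a Poisson process to a region gives a
Poisson process there, so `Φ` is monotone and subadditive. It is also translation invariant, and
`[0,t]^d` is covered by `⌈t/s⌉^d` translates of `[0,s]^d`.
-/

open Finset (univ)
open Finset.HasAntidiagonal (antidiagonal)
open scoped ENNReal NNReal Nat Pointwise

section ENNRealSeries

lemma tsum_sum_antidiagonal_mul (a b : ℕ → ℝ≥0∞) :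
    ∑' n, ∑ p ∈ antidiagonal n, a p.1 * b p.2 = (∑' n, a n) * ∑' n, b n := by
  calc ∑' n, ∑ p ∈ antidiagonal n, a p.1 * b p.2
      = ∑' (n : ℕ) (p : antidiagonal n), a p.1.1 * b p.1.2 := by
        simp_rw [tsum_fintype, fun n => Finset.sum_coe_sort (antidiagonal n)
          fun p => a p.1 * b p.2]
    _ = ∑' p : ℕ × ℕ, a p.1 * b p.2 := by
        rw [← ENNReal.tsum_sigma' fun z : Σ n : ℕ, antidiagonal n => a z.2.1.1 * b z.2.1.2]
        exact Finset.HasAntidiagonal.sigmaAntidiagonalEquivProd.tsum_eq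
          fun p : ℕ × ℕ => a p.1 * b p.2
    _ = (∑' n, a n) * ∑' n, b n := by
        simp_rw [ENNReal.tsum_prod', ENNReal.tsum_mul_left, ENNReal.tsum_mul_right]

lemma tsum_inv_factorial_mul_pow {x : ℝ≥0∞} (hx : x ≠ ∞) :
    ∑' n : ℕ, (n ! : ℝ≥0∞)⁻¹ * x ^ n = ENNReal.ofReal (Real.exp x.toReal) := by
  rw [Real.exp_eq_exp_ℝ, NormedSpace.exp_eq_tsum_div,
    ENNReal.ofReal_tsum_of_nonneg (fun n => by positivity) (Real.summable_pow_div_factorial _)]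
  refine tsum_congr fun n => ?_
  rw [ENNReal.ofReal_div_of_pos (by positivity), ENNReal.ofReal_pow (by positivity),
    ENNReal.ofReal_toReal hx, ENNReal.ofReal_natCast, div_eq_mul_inv, mul_comm]

lemma tsum_inv_factorial_mul_natCast_mul_pow (x : ℝ≥0∞) :
    ∑' n : ℕ, (n ! : ℝ≥0∞)⁻¹ * (n * x ^ n) = x * ∑' n : ℕ, (n ! : ℝ≥0∞)⁻¹ * x ^ n := by
  have inv_factorial_succ (n : ℕ) : ((n + 1)! : ℝ≥0∞)⁻¹ * (n + 1 : ℕ) = (n ! : ℝ≥0∞)⁻¹ := by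
    rw [Nat.factorial_succ, Nat.cast_mul, ENNReal.mul_inv (by simp) (by simp), mul_right_comm,
      ENNReal.inv_mul_cancel (by simp) (by simp), one_mul]
  rw [tsum_eq_zero_add' ENNReal.summable, ← ENNReal.tsum_mul_left]
  simp_rw [← mul_assoc, inv_factorial_succ, pow_succ', Nat.cast_zero, mul_zero, zero_mul, zero_add,
    mul_left_comm, mul_assoc]

lemma inv_factorial_add_mul_choose (i j : ℕ) :
    ((i + j)! : ℝ≥0∞)⁻¹ * ((i + j).choose i : ℝ≥0∞) = (i ! : ℝ≥0∞)⁻¹ * (j ! : ℝ≥0∞)⁻¹ := by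
  have cast_ne_zero {m : ℕ} (hm : m ≠ 0) : (m : ℝ≥0∞) ≠ 0 := Nat.cast_ne_zero.2 hm
  have factorial_add : ((i + j)! : ℝ≥0∞) = (i + j).choose i * (i ! * j !) := by
    rw [← mul_assoc, Nat.choose_symm_add]
    exact_mod_cast (Nat.add_choose_mul_factorial_mul_factorial i j).symm
  have choose_ne_zero := cast_ne_zero (Nat.choose_pos (Nat.le_add_right i j)).ne'
  rw [factorial_add, ENNReal.mul_inv (.inl choose_ne_zero) (.inl (ENNReal.natCast_ne_top _)),
    mul_right_comm, ENNReal.inv_mul_cancel choose_ne_zero (ENNReal.natCast_ne_top _), one_mul,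
    ENNReal.mul_inv (.inl (cast_ne_zero i.factorial_ne_zero)) (.inl (ENNReal.natCast_ne_top _))]

end ENNRealSeries

section Measure

lemma lintegral_comp_restrict_pi {ι : Type*} [Fintype ι] [DecidableEq ι] {α : ι → Type*}
    [∀ i, MeasurableSpace (α i)] (ν : ∀ i, Measure (α i)) [∀ i, SigmaFinite (ν i)]
    (J : Finset ι) {g : (∀ i : J, α i) → ℝ≥0∞} (hg : Measurable g) :
    ∫⁻ x, g (J.restrict x) ∂Measure.pi ν =
      (∫⁻ y, g y ∂Measure.pi fun i : J => ν i) * ∏ i ∈ Jᶜ, ν i Set.univ := by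
  calc ∫⁻ x, g (J.restrict x) ∂Measure.pi ν
      = ∫⁻ z, g z.1 * 1 ∂(Measure.pi fun i : J => ν i).prod
          (Measure.pi fun i : {i // i ∉ J} => ν i) := by
        simp_rw [mul_one]
        convert (measurePreserving_piEquivPiSubtypeProd ν (· ∈ J)).lintegral_comp_emb
          (MeasurableEquiv.measurableEmbedding _) fun z => g z.1
        rfl
    _ = (∫⁻ y, g y ∂Measure.pi fun i : J => ν i) * ∏ i : {i // i ∉ J}, ν i Set.univ := by
        rw [lintegral_prod_mul hg.aemeasurable aemeasurable_const, lintegral_const, one_mul,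
          Measure.pi_univ]
    _ = _ := by
        rw [Finset.prod_subtype Jᶜ (fun _ => Finset.mem_compl) fun i => ν i Set.univ]

lemma map_smul_restrict {E : Type*} [NormedAddCommGroup E] [NormedSpace ℝ E] [MeasurableSpace E]
    [BorelSpace E] [FiniteDimensional ℝ E] (μ : Measure E) [μ.IsAddHaarMeasure] {c : ℝ}
    (hc : c ≠ 0) (A : Set E) :
    (μ.restrict A).map (c • ·) =
      ENNReal.ofReal |(c ^ Module.finrank ℝ E)⁻¹| • μ.restrict (c • A) := by
  calc (μ.restrict A).map (c • ·) = (μ.map (c • ·)).restrict (c • A) := by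
        rw [(measurableEmbedding_const_smul₀ hc).restrict_map, Set.preimage_smul₀ hc,
          inv_smul_smul₀ hc]
    _ = ENNReal.ofReal |(c ^ Module.finrank ℝ E)⁻¹| • μ.restrict (c • A) := by
        rw [Measure.map_addHaar_smul μ hc, Measure.restrict_smul]

end Measure

lemma image_univ_comp_equiv {α ι κ : Type*} [DecidableEq α] [Fintype ι] [Fintype κ]
    (e : ι ≃ κ) (y : κ → α) : univ.image (y ∘ e) = univ.image y := by
  classical
  rw [← Finset.image_image, Finset.image_univ_equiv]

section Selection

variable {α ι : Type*} {A : Set α} {J : Finset ι} {x : ι → α}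

/-- The set of families of points whose members lying in `A` are exactly those indexed by `J`. -/
def selectionSet (A : Set α) (J : Finset ι) : Set (ι → α) :=
  {x | ∀ i, x i ∈ A ↔ i ∈ J}

lemma filter_mem_image_of_mem_selectionSet [Fintype ι] [DecidableEq α]
    [DecidablePred (· ∈ A)] (hx : x ∈ selectionSet A J) :
    {v ∈ univ.image x | v ∈ A} = univ.image (J.restrict x) := by
  ext v
  simp only [Finset.mem_filter, Finset.mem_image, Finset.mem_univ, true_and, Finset.restrict,
    Subtype.exists]
  constructor
  · rintro ⟨⟨i, rfl⟩, hi⟩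
    exact ⟨i, (hx i).1 hi, rfl⟩
  · rintro ⟨i, hi, rfl⟩
    exact ⟨⟨i, rfl⟩, (hx i).2 hi⟩

lemma selectionSet_eq_pi [DecidableEq ι] (A : Set α) (J : Finset ι) :
    selectionSet A J = Set.univ.pi fun i => if i ∈ J then A else Aᶜ := by
  ext x
  simp only [selectionSet, Set.mem_pi, Set.mem_univ, true_imp_iff]
  refine forall_congr' fun i => ?_
  split_ifs with hi <;> simp [hi]

lemma apply_filter_image_eq_sum_indicator [Fintype ι] [DecidableEq α]
    [DecidablePred (· ∈ A)] (f : Finset α → ℝ≥0∞) (x : ι → α) :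
    f {v ∈ univ.image x | v ∈ A} =
      ∑ J : Finset ι, (selectionSet A J).indicator (fun x => f (univ.image (J.restrict x))) x := by
  let K : Finset ι := {i | x i ∈ A}
  have mem_iff (J : Finset ι) : x ∈ selectionSet A J ↔ J = K := by
    simp [selectionSet, K, Finset.ext_iff, iff_comm]
  rw [Finset.sum_eq_single_of_mem K (Finset.mem_univ K)
    fun J _ hJ => Set.indicator_of_notMem (mt (mem_iff J).1 hJ) _,
    Set.indicator_of_mem ((mem_iff K).2 rfl),
    filter_mem_image_of_mem_selectionSet ((mem_iff K).2 rfl)]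

lemma measurableSet_selectionSet [MeasurableSpace α] [Countable ι] (hA : MeasurableSet A)
    (J : Finset ι) : MeasurableSet (selectionSet A J) :=
  measurableSet_setOfPred.2 <| Measurable.forall fun i =>
    ((measurable_mem.2 hA).comp (measurable_pi_apply i)).iff measurable_const

end Selection

section PointProcess

variable {α β : Type*} [MeasurableSpace α] [DecidableEq α] [MeasurableSpace β] [DecidableEq β]
  {f g : Finset α → ℝ≥0∞} {μ : Measure α} {A : Set α}

/-- A functional of finite configurations is measurable if it is so as a function of any finite
list of points; repeated points of the list are merged. -/
def ConfigMeasurable (f : Finset α → ℝ≥0∞) : Prop :=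
  ∀ n : ℕ, Measurable fun x : Fin n → α => f (univ.image x)

/-- The integral `∫⁻ f {x₁, …, xₙ} dμⁿ`, i.e. the expectation of `f` on a sample of `n` i.i.d.
points when `μ` is a probability measure. -/
noncomputable def sampleLIntegral (f : Finset α → ℝ≥0∞) (μ : Measure α) (n : ℕ) : ℝ≥0∞ :=
  ∫⁻ x : Fin n → α, f (univ.image x) ∂Measure.pi fun _ => μ

/-- The expectation of `f` on a Poisson point process whose intensity is the finite measure `μ`.
The factors `μ(univ)ⁿ` of the Poisson weights are absorbed by integrating against the
unnormalized product `μⁿ`. -/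
noncomputable def poissonLIntegral (f : Finset α → ℝ≥0∞) (μ : Measure α) : ℝ≥0∞ :=
  ENNReal.ofReal (Real.exp (-(μ Set.univ).toReal)) *
    ∑' n : ℕ, (n ! : ℝ≥0∞)⁻¹ * sampleLIntegral f μ n

lemma ConfigMeasurable.comp_image (hf : ConfigMeasurable f) (ι : Type*) [Fintype ι] :
    Measurable fun y : ι → α => f (univ.image y) := by
  let e := Fintype.equivFin ι
  simp_rw [← image_univ_comp_equiv e.symm]
  exact (hf _).comp (measurable_pi_lambda _ fun i => measurable_pi_apply (e.symm i))

lemma lintegral_image_eq_sampleLIntegral (f : Finset α → ℝ≥0∞) (μ : Measure α) [SigmaFinite μ]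
    (ι : Type*) [Fintype ι] :
    ∫⁻ y : ι → α, f (univ.image y) ∂(Measure.pi fun _ => μ) =
      sampleLIntegral f μ (Fintype.card ι) := by
  let e := Fintype.equivFin ι
  rw [sampleLIntegral, ← (measurePreserving_piCongrLeft (fun _ => μ) e).lintegral_comp_emb
    (MeasurableEquiv.measurableEmbedding _)]
  refine lintegral_congr fun y => ?_
  rw [← image_univ_comp_equiv e]
  congr 2
  ext i
  exact (MeasurableEquiv.piCongrLeft_apply_apply (β := fun _ => α) e y i).symm

lemma sampleLIntegral_smul (f : Finset α → ℝ≥0∞) (μ : Measure α) [IsFiniteMeasure μ] {a : ℝ≥0∞}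
    (ha : a ≠ ∞) (n : ℕ) : sampleLIntegral f (a • μ) n = a ^ n * sampleLIntegral f μ n := by
  have := Measure.smul_finite μ ha
  have pi_smul : (Measure.pi fun _ : Fin n => a • μ) = a ^ n • Measure.pi fun _ => μ :=
    Measure.pi_eq fun s _ => by simp [Measure.pi_pi, Finset.prod_mul_distrib]
  rw [sampleLIntegral, pi_smul, lintegral_smul_measure, sampleLIntegral, smul_eq_mul]

lemma sampleLIntegral_le_mul_pow [SigmaFinite μ] (hf : ∀ V, f V ≤ V.card) (n : ℕ) :
    sampleLIntegral f μ n ≤ n * μ Set.univ ^ n := by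
  calc sampleLIntegral f μ n
      ≤ ∫⁻ _ : Fin n → α, n ∂Measure.pi fun _ => μ :=
        lintegral_mono fun x => (hf _).trans <| Nat.cast_le.2 <|
          Finset.card_image_le.trans_eq (Finset.card_fin n)
    _ = n * μ Set.univ ^ n := by simp [Measure.pi_univ]

lemma poissonLIntegral_le_measure_univ [IsFiniteMeasure μ] (hf : ∀ V, f V ≤ V.card) :
    poissonLIntegral f μ ≤ μ Set.univ := by
  set a := μ Set.univ
  have ha : a ≠ ∞ := measure_ne_top μ _
  calc poissonLIntegral f μ
      ≤ ENNReal.ofReal (Real.exp (-a.toReal)) * ∑' n : ℕ, (n ! : ℝ≥0∞)⁻¹ * (n * a ^ n) := by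
        unfold poissonLIntegral
        gcongr
        exact sampleLIntegral_le_mul_pow hf _
    _ = a := by
        rw [tsum_inv_factorial_mul_natCast_mul_pow, tsum_inv_factorial_mul_pow ha, mul_left_comm,
          ← ENNReal.ofReal_mul (by positivity), ← Real.exp_add, neg_add_cancel, Real.exp_zero,
          ENNReal.ofReal_one, mul_one]

lemma toReal_poissonLIntegral_smul [IsProbabilityMeasure μ] (hf : ∀ V, f V ≤ V.card) (a : ℝ≥0) :
    (poissonLIntegral f (a • μ)).toReal =
      ∑' n : ℕ, Real.exp (-a) * a ^ n / n ! * (sampleLIntegral f μ n).toReal := by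
  have measure_univ_smul : (a • μ) Set.univ = a := by
    rw [ENNReal.smul_def, Measure.smul_apply, measure_univ, smul_eq_mul, mul_one]
  have sample_smul (n : ℕ) : sampleLIntegral f (a • μ) n = a ^ n * sampleLIntegral f μ n :=
    sampleLIntegral_smul f μ ENNReal.coe_ne_top n
  have sample_ne_top (n : ℕ) : sampleLIntegral f μ n ≠ ∞ :=
    ne_top_of_le_ne_top (by simp) (sampleLIntegral_le_mul_pow hf n)
  have term_ne_top (n : ℕ) : (n ! : ℝ≥0∞)⁻¹ * (a ^ n * sampleLIntegral f μ n) ≠ ∞ :=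
    ENNReal.mul_ne_top (by simp [Nat.factorial_ne_zero])
      (ENNReal.mul_ne_top (by simp) (sample_ne_top n))
  simp_rw [poissonLIntegral, measure_univ_smul, sample_smul]
  rw [ENNReal.toReal_mul, ENNReal.tsum_toReal_eq term_ne_top, ← tsum_mul_left,
    ENNReal.toReal_ofReal (Real.exp_nonneg _)]
  refine tsum_congr fun n => ?_
  simp only [ENNReal.toReal_mul, ENNReal.toReal_inv, ENNReal.toReal_natCast, ENNReal.toReal_pow,
    ENNReal.coe_toReal]
  ring

lemma poissonLIntegral_mono (hfg : f ≤ g) (μ : Measure α) :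
    poissonLIntegral f μ ≤ poissonLIntegral g μ := by
  unfold poissonLIntegral sampleLIntegral
  gcongr
  exact hfg _

lemma poissonLIntegral_map {f : Finset β → ℝ≥0∞} (hf : ConfigMeasurable f) (μ : Measure α)
    [IsFiniteMeasure μ] {e : α → β} (he : Measurable e) :
    poissonLIntegral f (μ.map e) = poissonLIntegral (fun V => f (V.image e)) μ := by
  have sample_map (n : ℕ) :
      sampleLIntegral f (μ.map e) n = sampleLIntegral (fun V => f (V.image e)) μ n := by
    unfold sampleLIntegral
    have map_measurable : Measurable fun (x : Fin n → α) i => e (x i) :=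
      measurable_pi_lambda _ fun i => he.comp (measurable_pi_apply i)
    rw [← Measure.pi_map_pi fun _ => he.aemeasurable, lintegral_map (hf n) map_measurable]
    simp_rw [Finset.image_image]
    rfl
  simp_rw [poissonLIntegral, sample_map, Measure.map_apply he .univ, Set.preimage_univ]

section Thinning

lemma ConfigMeasurable.indicator_selectionSet {ι : Type*} [Countable ι] (hf : ConfigMeasurable f)
    (hA : MeasurableSet A) (J : Finset ι) :
    Measurable ((selectionSet A J).indicator fun x => f (univ.image (J.restrict x))) :=
  ((hf.comp_image J).comp J.measurable_restrict).indicator (measurableSet_selectionSet hA J)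

lemma ConfigMeasurable.filter [DecidablePred (· ∈ A)] (hf : ConfigMeasurable f)
    (hA : MeasurableSet A) : ConfigMeasurable fun V => f {v ∈ V | v ∈ A} := fun n => by
  simp_rw [apply_filter_image_eq_sum_indicator]
  exact Finset.measurable_sum _ fun J _ => hf.indicator_selectionSet hA J

lemma setLIntegral_selectionSet {ι : Type*} [Fintype ι] [IsFiniteMeasure μ]
    (hf : ConfigMeasurable f) (J : Finset ι) :
    ∫⁻ x in selectionSet A J, f (univ.image (J.restrict x)) ∂Measure.pi (fun _ => μ) =
      sampleLIntegral f (μ.restrict A) J.card * μ Aᶜ ^ (Fintype.card ι - J.card) := by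
  classical
  let ν (i : ι) : Measure α := μ.restrict (if i ∈ J then A else Aᶜ)
  have hν_mem (i : J) : ν i = μ.restrict A := by simp only [ν, i.2, if_true]
  have hν_compl : ∀ i ∈ Jᶜ, ν i Set.univ = μ Aᶜ := fun i hi => by
    simp only [ν, Finset.mem_compl.1 hi, if_false, Measure.restrict_apply_univ]
  calc ∫⁻ x in selectionSet A J, f (univ.image (J.restrict x)) ∂Measure.pi (fun _ => μ)
      = ∫⁻ x, f (univ.image (J.restrict x)) ∂Measure.pi ν := by
        rw [selectionSet_eq_pi, Measure.restrict_pi_pi]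
    _ = (∫⁻ y, f (univ.image y) ∂Measure.pi fun i : J => ν i) * ∏ i ∈ Jᶜ, ν i Set.univ :=
        lintegral_comp_restrict_pi ν J (hf.comp_image J)
    _ = sampleLIntegral f (μ.restrict A) J.card * μ Aᶜ ^ (Fintype.card ι - J.card) := by
        simp_rw [hν_mem]
        rw [lintegral_image_eq_sampleLIntegral, Fintype.card_coe, Finset.prod_congr rfl hν_compl,
          Finset.prod_const, Finset.card_compl]

lemma sampleLIntegral_filter [IsFiniteMeasure μ] [DecidablePred (· ∈ A)] (hf : ConfigMeasurable f)
    (hA : MeasurableSet A) (n : ℕ) :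
    sampleLIntegral (fun V => f {v ∈ V | v ∈ A}) μ n =
      ∑ p ∈ antidiagonal n,
        n.choose p.1 * (sampleLIntegral f (μ.restrict A) p.1 * μ Aᶜ ^ p.2) := by
  calc sampleLIntegral (fun V => f {v ∈ V | v ∈ A}) μ n
      = ∑ J : Finset (Fin n),
          ∫⁻ x in selectionSet A J, f (univ.image (J.restrict x)) ∂Measure.pi (fun _ => μ) := by
        simp_rw [sampleLIntegral, apply_filter_image_eq_sum_indicator]
        rw [lintegral_finsetSum _ fun J _ => hf.indicator_selectionSet hA J]
        simp_rw [lintegral_indicator (measurableSet_selectionSet hA _)]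
    _ = ∑ J : Finset (Fin n),
          sampleLIntegral f (μ.restrict A) J.card * μ Aᶜ ^ (n - J.card) := by
        simp_rw [setLIntegral_selectionSet hf, Fintype.card_fin]
    _ = _ := by
        rw [← Finset.powerset_univ, Finset.sum_powerset_apply_card
          fun j => sampleLIntegral f (μ.restrict A) j * μ Aᶜ ^ (n - j), Finset.card_fin,
          Finset.Nat.sum_antidiagonal_eq_sum_range_succ fun i j =>
            n.choose i * (sampleLIntegral f (μ.restrict A) i * μ Aᶜ ^ j)]
        simp_rw [nsmul_eq_mul]

/-- The number of points outside `A` is summed out independently of the points in `A`; the resulting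
exponential series turns the normalization `exp (-μ(univ))` into `exp (-μ(A))`. -/
lemma poissonLIntegral_filter [IsFiniteMeasure μ] [DecidablePred (· ∈ A)]
    (hf : ConfigMeasurable f) (hA : MeasurableSet A) :
    poissonLIntegral (fun V => f {v ∈ V | v ∈ A}) μ = poissonLIntegral f (μ.restrict A) := by
  have series_eq : ∑' n : ℕ, (n ! : ℝ≥0∞)⁻¹ * sampleLIntegral (fun V => f {v ∈ V | v ∈ A}) μ n =
      (∑' n : ℕ, (n ! : ℝ≥0∞)⁻¹ * sampleLIntegral f (μ.restrict A) n) *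
        ENNReal.ofReal (Real.exp (μ Aᶜ).toReal) := by
    rw [← tsum_inv_factorial_mul_pow (measure_ne_top μ _), ← tsum_sum_antidiagonal_mul]
    refine tsum_congr fun n => ?_
    rw [sampleLIntegral_filter hf hA, Finset.mul_sum]
    refine Finset.sum_congr rfl fun p hp => ?_
    rw [← Finset.HasAntidiagonal.mem_antidiagonal.1 hp, ← mul_assoc, inv_factorial_add_mul_choose]
    ring
  have exp_split : ENNReal.ofReal (Real.exp (-(μ Set.univ).toReal)) *
      ENNReal.ofReal (Real.exp (μ Aᶜ).toReal) = ENNReal.ofReal (Real.exp (-(μ A).toReal)) := by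
    rw [← ENNReal.ofReal_mul (by positivity), ← Real.exp_add, ← measure_add_measure_compl hA,
      ENNReal.toReal_add (measure_ne_top _ _) (measure_ne_top _ _), neg_add, neg_add_cancel_right]
  rw [poissonLIntegral, poissonLIntegral, series_eq, Measure.restrict_apply_univ, ← exp_split]
  ring

end Thinning

lemma poissonLIntegral_restrict_le [IsFiniteMeasure μ] (hf : ConfigMeasurable f)
    (hf_mono : Monotone f) (hA : MeasurableSet A) :
    poissonLIntegral f (μ.restrict A) ≤ poissonLIntegral f μ := by
  classical
  rw [← poissonLIntegral_filter hf hA]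
  exact poissonLIntegral_mono (fun V => hf_mono (Finset.filter_subset _ V)) μ

lemma poissonLIntegral_finsetSum {ι : Type*} (s : Finset ι) {f : ι → Finset α → ℝ≥0∞}
    (hf : ∀ i ∈ s, ConfigMeasurable (f i)) (μ : Measure α) :
    poissonLIntegral (fun V => ∑ i ∈ s, f i V) μ = ∑ i ∈ s, poissonLIntegral (f i) μ := by
  simp_rw [poissonLIntegral, sampleLIntegral, lintegral_finsetSum s fun i hi => hf i hi _,
    ← Finset.mul_sum, ← Summable.tsum_finsetSum fun _ _ => ENNReal.summable, ← Finset.mul_sum]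

lemma poissonLIntegral_mono_ae [SigmaFinite μ] {p : α → Prop} (hp : ∀ᵐ x ∂μ, p x)
    (hfg : ∀ V : Finset α, (∀ v ∈ V, p v) → f V ≤ g V) :
    poissonLIntegral f μ ≤ poissonLIntegral g μ := by
  have ae_forall (n : ℕ) : ∀ᵐ x ∂Measure.pi fun _ : Fin n => μ, ∀ i, p (x i) :=
    eventually_all.2 fun i => (Measure.tendsto_eval_ae_ae (μ := fun _ => μ) (i := i)).eventually hp
  have sample_le (n : ℕ) : sampleLIntegral f μ n ≤ sampleLIntegral g μ n :=
    lintegral_mono_ae <| (ae_forall n).mono fun x hx => hfg _ (by simpa using hx)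
  unfold poissonLIntegral
  gcongr with n
  exact sample_le n

lemma poissonLIntegral_le_sum_restrict [IsFiniteMeasure μ] (hf : ConfigMeasurable f)
    {ι : Type*} [Fintype ι] {A : ι → Set α} (hA : ∀ i, MeasurableSet (A i))
    (hf_sub : ∀ (V : Finset α) (W : ι → Finset α), V ⊆ univ.biUnion W → f V ≤ ∑ i, f (W i))
    (hcover : ∀ᵐ x ∂μ, ∃ i, x ∈ A i) :
    poissonLIntegral f μ ≤ ∑ i, poissonLIntegral f (μ.restrict (A i)) := by
  classical
  calc poissonLIntegral f μ ≤ poissonLIntegral (fun V => ∑ i, f {v ∈ V | v ∈ A i}) μ :=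
        poissonLIntegral_mono_ae hcover fun V hV =>
          hf_sub V _ fun v hv => by simpa [hv] using hV v hv
    _ = ∑ i, poissonLIntegral (fun V => f {v ∈ V | v ∈ A i}) μ :=
        poissonLIntegral_finsetSum _ (fun i _ => hf.filter (hA i)) μ
    _ = ∑ i, poissonLIntegral f (μ.restrict (A i)) := by
        simp_rw [poissonLIntegral_filter hf (hA _)]

end PointProcess

section Colorability

variable {d k : ℕ} {r r' : ℝ} {S T V : Finset (EuclideanSpace ℝ (Fin d))}

/-- The geometric graph `G_r(S)` is properly `k`-colorable. As in `maxColorable`, colorings are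
defined on the whole space, so for `k = 0` not even the empty graph is colorable. -/
def GeomColorable (k : ℕ) (r : ℝ) (S : Finset (EuclideanSpace ℝ (Fin d))) : Prop :=
  ∃ c : EuclideanSpace ℝ (Fin d) → Fin k, ∀ u ∈ S, ∀ v ∈ S, u ≠ v → dist u v ≤ r → c u ≠ c v

lemma GeomColorable.subset (hT : GeomColorable k r T) (h : S ⊆ T) : GeomColorable k r S :=
  hT.imp fun _ hc u hu v hv => hc u (h hu) v (h hv)

lemma geomColorable_image_iff [NeZero k] {ι : Type*} {I : Finset ι}
    {x : ι → EuclideanSpace ℝ (Fin d)} (hx : Set.InjOn x I) :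
    GeomColorable k r (I.image x) ↔
      ∃ c : ι → Fin k, ∀ i ∈ I, ∀ j ∈ I, i ≠ j → dist (x i) (x j) ≤ r → c i ≠ c j := by
  simp only [GeomColorable, Finset.forall_mem_image]
  constructor
  · rintro ⟨c, hc⟩
    exact ⟨c ∘ x, fun i hi j hj hij => hc hi hj (hx.ne hi hj hij)⟩
  · rintro ⟨c, hc⟩
    refine ⟨Function.extend (fun i : I => x i) (fun i => c i) 0, fun i hi j hj hij => ?_⟩
    have extend_apply {l : ι} (hl : l ∈ I) :
        Function.extend (fun i : I => x i) (fun i => c i) 0 (x l) = c l :=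
      Function.Injective.extend_apply (Set.injOn_iff_injective.1 hx) _ _ ⟨l, hl⟩
    rw [extend_apply hi, extend_apply hj]
    exact hc i hi j hj (ne_of_apply_ne x hij)

lemma le_maxColorable_iff [NeZero k] {m : ℕ} :
    m ≤ maxColorable d k r V ↔ ∃ S ⊆ V, m ≤ S.card ∧ GeomColorable k r S := by
  let cards := {m | ∃ S ⊆ V, S.card = m ∧ GeomColorable k r S}
  have cards_bddAbove : BddAbove cards :=
    ⟨V.card, by rintro _ ⟨S, hS, rfl, -⟩; exact Finset.card_le_card hS⟩
  have cards_nonempty : cards.Nonempty := ⟨0, ∅, by simp [GeomColorable]⟩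
  constructor
  · intro hm
    obtain ⟨S, hSV, hScard, hS⟩ := Nat.sSup_mem cards_nonempty cards_bddAbove
    exact ⟨S, hSV, hm.trans_eq hScard.symm, hS⟩
  · rintro ⟨S, hSV, hm, hS⟩
    exact hm.trans (le_csSup cards_bddAbove ⟨S, hSV, rfl, hS⟩)

lemma maxColorable_le_card [NeZero k] (r : ℝ) (V : Finset (EuclideanSpace ℝ (Fin d))) :
    maxColorable d k r V ≤ V.card :=
  let ⟨_, hSV, hS, _⟩ := le_maxColorable_iff.1 le_rfl
  hS.trans (Finset.card_le_card hSV)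

lemma maxColorable_mono [NeZero k] (r : ℝ) : Monotone (maxColorable d k r) := fun _ _ hVW =>
  let ⟨S, hSV, hS⟩ := le_maxColorable_iff.1 le_rfl
  le_maxColorable_iff.2 ⟨S, hSV.trans hVW, hS⟩

lemma maxColorable_le_sum [NeZero k] {ι : Type*} [Fintype ι]
    {W : ι → Finset (EuclideanSpace ℝ (Fin d))} (hV : V ⊆ univ.biUnion W) :
    maxColorable d k r V ≤ ∑ i, maxColorable d k r (W i) := by
  obtain ⟨S, hSV, hcard, hS⟩ := (le_maxColorable_iff (k := k) (r := r) (V := V)).1 le_rfl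
  have S_eq : S = univ.biUnion fun i => S ∩ W i := by
    rw [← Finset.inter_biUnion, Finset.inter_eq_left.2 (hSV.trans hV)]
  calc maxColorable d k r V ≤ S.card := hcard
    _ ≤ ∑ i, (S ∩ W i).card := (congrArg Finset.card S_eq).trans_le Finset.card_biUnion_le
    _ ≤ ∑ i, maxColorable d k r (W i) := Finset.sum_le_sum fun i _ =>
        le_maxColorable_iff.2
          ⟨S ∩ W i, Finset.inter_subset_right, le_rfl, hS.subset Finset.inter_subset_left⟩

lemma maxColorable_image [NeZero k] {e : EuclideanSpace ℝ (Fin d) → EuclideanSpace ℝ (Fin d)}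
    (he_inj : e.Injective) (he : ∀ x y, dist (e x) (e y) ≤ r' ↔ dist x y ≤ r)
    (V : Finset (EuclideanSpace ℝ (Fin d))) :
    maxColorable d k r' (V.image e) = maxColorable d k r V := by
  have colorable_iff (S : Finset (EuclideanSpace ℝ (Fin d))) :
      GeomColorable k r' (S.image e) ↔ GeomColorable k r S := by
    simp_rw [geomColorable_image_iff he_inj.injOn, he, GeomColorable]
  refine eq_of_forall_le_iff fun m => ?_
  simp only [le_maxColorable_iff, Finset.subset_image_iff, exists_exists_and_eq_and,
    Finset.card_image_of_injective _ he_inj, colorable_iff]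

lemma le_maxColorable_image_univ_iff [NeZero k] {ι : Type*} [Fintype ι] {m : ℕ}
    {x : ι → EuclideanSpace ℝ (Fin d)} :
    m ≤ maxColorable d k r (univ.image x) ↔ ∃ (I : Finset ι) (c : ι → Fin k), m ≤ I.card ∧
      ∀ i ∈ I, ∀ j ∈ I, i ≠ j → x i ≠ x j ∧ (dist (x i) (x j) ≤ r → c i ≠ c j) := by
  rw [le_maxColorable_iff]
  constructor
  · rintro ⟨S, hSV, hm, hS⟩
    have x_surjOn : Set.SurjOn x (univ : Finset ι) S := fun v hv => by simpa using hSV hv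
    obtain ⟨I, -, hI_inj, rfl⟩ := Finset.exists_subset_injOn_image_eq_of_surjOn _ _ x_surjOn
    obtain ⟨c, hc⟩ := (geomColorable_image_iff hI_inj).1 hS
    exact ⟨I, c, hm.trans Finset.card_image_le, fun i hi j hj hij =>
      ⟨hI_inj.ne hi hj hij, hc i hi j hj hij⟩⟩
  · rintro ⟨I, c, hm, hc⟩
    have hI_inj : Set.InjOn x I := fun i hi j hj => not_imp_not.1 fun hij => (hc i hi j hj hij).1
    exact ⟨I.image x, Finset.image_subset_image (Finset.subset_univ I),
      hm.trans_eq (Finset.card_image_of_injOn hI_inj).symm,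
      (geomColorable_image_iff hI_inj).2 ⟨c, fun i hi j hj hij => (hc i hi j hj hij).2⟩⟩

lemma configMeasurable_maxColorable [NeZero k] (r : ℝ) :
    ConfigMeasurable fun V => (maxColorable d k r V : ℝ≥0∞) := fun n => by
  refine measurable_from_top.comp (measurable_of_Ici fun m => ?_)
  simp only [Set.preimage, Set.mem_Ici, le_maxColorable_image_univ_iff]
  have eval (i : Fin n) : Measurable fun x : Fin n → EuclideanSpace ℝ (Fin d) => x i :=
    measurable_pi_apply i
  have measurable_ne (i j) : Measurable fun x : Fin n → EuclideanSpace ℝ (Fin d) => x i ≠ x j :=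
    (measurableSet_setOfPred.1 (measurableSet_eq_fun (eval i) (eval j))).not
  have measurable_dist_le (i j) :
      Measurable fun x : Fin n → EuclideanSpace ℝ (Fin d) => dist (x i) (x j) ≤ r :=
    measurableSet_setOfPred.1 (measurableSet_le ((eval i).dist (eval j)) measurable_const)
  refine measurableSet_setOfPred.2 <| .exists fun I => .exists fun c => measurable_const.and <|
    .forall fun i => .imp measurable_const <| .forall fun j => .imp measurable_const <|
    .imp measurable_const <| (measurable_ne i j).and ((measurable_dist_le i j).imp measurable_const)

end Colorability

section ExpectedColorable

variable {d k : ℕ} {r r' : ℝ} {A : Set (EuclideanSpace ℝ (Fin d))}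
  {μ : Measure (EuclideanSpace ℝ (Fin d))}

/-- The expected maximum number of `k`-colorable vertices of the geometric graph of radius `r` on a
Poisson point process of intensity `μ`. -/
noncomputable def expectedColorable (k : ℕ) (r : ℝ) (μ : Measure (EuclideanSpace ℝ (Fin d))) :
    ℝ≥0∞ :=
  poissonLIntegral (fun V => (maxColorable d k r V : ℝ≥0∞)) μ

lemma expectedColorable_ne_top [NeZero k] [IsFiniteMeasure μ] : expectedColorable k r μ ≠ ∞ :=
  ne_top_of_le_ne_top (measure_ne_top μ _) <|
    poissonLIntegral_le_measure_univ fun V => Nat.cast_le.2 (maxColorable_le_card r V)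

lemma expectedColorable_restrict_le_sum [NeZero k] {ι : Type*} [Fintype ι]
    {B : ι → Set (EuclideanSpace ℝ (Fin d))} [IsFiniteMeasure (μ.restrict A)]
    [∀ i, IsFiniteMeasure (μ.restrict (B i))] (hA : MeasurableSet A)
    (hB : ∀ i, MeasurableSet (B i)) (hAB : A ⊆ ⋃ i, B i) :
    expectedColorable k r (μ.restrict A) ≤ ∑ i, expectedColorable k r (μ.restrict (B i)) := by
  have hf := configMeasurable_maxColorable (d := d) (k := k) r
  calc expectedColorable k r (μ.restrict A)
      ≤ ∑ i, expectedColorable k r ((μ.restrict A).restrict (B i)) :=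
        poissonLIntegral_le_sum_restrict hf hB (fun V W hVW => mod_cast maxColorable_le_sum hVW) <|
          ae_restrict_of_forall_mem hA fun x hx => Set.mem_iUnion.1 (hAB hx)
    _ = ∑ i, expectedColorable k r ((μ.restrict (B i)).restrict A) := by
        simp_rw [Measure.restrict_restrict hA, Measure.restrict_restrict (hB _), Set.inter_comm]
    _ ≤ ∑ i, expectedColorable k r (μ.restrict (B i)) := Finset.sum_le_sum fun i _ =>
        poissonLIntegral_restrict_le hf (fun V W hVW => mod_cast maxColorable_mono r hVW) hA

lemma expectedColorable_map [NeZero k] [IsFiniteMeasure μ]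
    {e : EuclideanSpace ℝ (Fin d) → EuclideanSpace ℝ (Fin d)} (he_meas : Measurable e)
    (he_inj : e.Injective) (he : ∀ x y, dist (e x) (e y) ≤ r' ↔ dist x y ≤ r) :
    expectedColorable k r' (μ.map e) = expectedColorable k r μ := by
  simp_rw [expectedColorable, poissonLIntegral_map (configMeasurable_maxColorable r') μ he_meas,
    maxColorable_image he_inj he]

lemma expectedColorable_restrict_vadd [NeZero k] [μ.IsAddLeftInvariant]
    [IsFiniteMeasure (μ.restrict A)] (v : EuclideanSpace ℝ (Fin d)) :
    expectedColorable k r (μ.restrict (v +ᵥ A)) = expectedColorable k r (μ.restrict A) := by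
  have translate := (measurePreserving_add_left μ v).restrict_image_emb
    (measurableEmbedding_addLeft v) A
  calc expectedColorable k r (μ.restrict (v +ᵥ A))
      = expectedColorable k r ((μ.restrict A).map (v + ·)) := by rw [translate.map_eq]; rfl
    _ = expectedColorable k r (μ.restrict A) :=
        expectedColorable_map translate.measurable (add_right_injective v)
          fun x y => by rw [dist_add_left]

lemma expectedColorable_restrict_smul [NeZero k] [IsFiniteMeasure (volume.restrict A)]
    (a : ℝ≥0) {c : ℝ} (hc : 0 < c) :
    expectedColorable k (c * r) ((a • volume).restrict (c • A)) =
      expectedColorable k r ((a * c ^ d).toNNReal • volume.restrict A) := by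
  have intensity_eq : ((a * c ^ d).toNNReal : ℝ≥0∞) * ENNReal.ofReal |(c ^ d)⁻¹| = a := by
    rw [abs_of_pos (by positivity), ← ENNReal.ofReal, ← ENNReal.ofReal_mul (by positivity),
      mul_inv_cancel_right₀ (by positivity), ENNReal.ofReal_coe_nnreal]
  calc expectedColorable k (c * r) ((a • volume).restrict (c • A))
      = expectedColorable k (c * r) (((a * c ^ d).toNNReal • volume.restrict A).map (c • ·)) := by
        rw [Measure.map_smul, map_smul_restrict volume hc.ne', finrank_euclideanSpace_fin,
          ENNReal.smul_def (a * c ^ d).toNNReal, smul_smul, intensity_eq, Measure.restrict_smul,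
          ENNReal.smul_def a]
    _ = expectedColorable k r ((a * c ^ d).toNNReal • volume.restrict A) :=
        expectedColorable_map (measurable_const_smul c) (smul_right_injective _ hc.ne')
          fun x y => by rw [dist_smul₀, Real.norm_of_nonneg hc.le, mul_le_mul_iff_right₀ hc]

end ExpectedColorable

section Cubes

variable {d : ℕ}

lemma unitCube_eq_preimage_pi (d : ℕ) :
    unitCube d = WithLp.ofLp ⁻¹' Set.univ.pi fun _ => Set.Icc 0 1 := by
  ext x
  simp only [unitCube, Set.mem_ofPred_eq, Set.mem_preimage, Set.mem_univ_pi]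

lemma isCompact_unitCube (d : ℕ) : IsCompact (unitCube d) := by
  rw [unitCube_eq_preimage_pi]
  exact (PiLp.homeomorph 2 fun _ : Fin d => ℝ).isCompact_preimage.2
    (isCompact_univ_pi fun _ => isCompact_Icc)

lemma volume_unitCube (d : ℕ) : volume (unitCube d) = 1 := by
  rw [unitCube_eq_preimage_pi, (PiLp.volume_preserving_ofLp (Fin d)).measure_preimage
    (MeasurableSet.univ_pi fun _ => measurableSet_Icc).nullMeasurableSet, volume_pi_pi]
  simp

instance isProbabilityMeasure_uniformCube (d : ℕ) : IsProbabilityMeasure (uniformCube d) :=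
  ⟨by rw [uniformCube, Measure.restrict_apply_univ, volume_unitCube]⟩

lemma mem_smul_unitCube {c : ℝ} (hc : 0 < c) {x : EuclideanSpace ℝ (Fin d)} :
    x ∈ c • unitCube d ↔ ∀ i, x i ∈ Set.Icc 0 c := by
  simp [Set.mem_smul_set_iff_inv_smul_mem₀ hc.ne', unitCube, inv_mul_le_iff₀ hc, hc]

lemma exists_fin_sub_mul_mem_Icc {m : ℕ} [NeZero m] {s x : ℝ} (hs : 0 < s)
    (hx : x ∈ Set.Icc 0 (m * s)) : ∃ i : Fin m, x - i * s ∈ Set.Icc 0 s := by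
  have ceil_le : ⌈x / s⌉₊ ≤ m := Nat.ceil_le.2 ((div_le_iff₀ hs).2 hx.2)
  cases hn : ⌈x / s⌉₊ with
  | zero =>
    have x_le : x ≤ 0 := by simpa [hs] using (div_le_iff₀ hs).1 (Nat.ceil_eq_zero.1 hn)
    exact ⟨0, by simpa using ⟨hx.1, x_le.trans hs.le⟩⟩
  | succ i =>
    have le_x : i * s < x := (lt_div_iff₀ hs).1 (Nat.lt_ceil.1 (by omega))
    have x_le : x ≤ (i + 1 : ℕ) * s := (div_le_iff₀ hs).1 (hn ▸ Nat.le_ceil _)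
    refine ⟨⟨i, by omega⟩, sub_nonneg.2 le_x.le, ?_⟩
    rw [sub_le_iff_le_add]
    push_cast at x_le ⊢
    linarith

lemma smul_unitCube_subset_iUnion {m : ℕ} [NeZero m] {s t : ℝ} (hs : 0 < s) (ht : 0 < t)
    (htm : t ≤ m * s) :
    t • unitCube d ⊆
      ⋃ i : Fin d → Fin m, WithLp.toLp 2 (fun j => (i j : ℝ) * s) +ᵥ s • unitCube d := by
  intro x hx
  have coord_mem (j : Fin d) : x j ∈ Set.Icc 0 (m * s) :=
    Set.Icc_subset_Icc_right htm ((mem_smul_unitCube ht).1 hx j)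
  choose i hi using fun j => exists_fin_sub_mul_mem_Icc hs (coord_mem j)
  refine Set.mem_iUnion.2 ⟨i, Set.mem_vadd_set_iff_neg_vadd_mem.2 ((mem_smul_unitCube hs).2 ?_)⟩
  simpa [neg_add_eq_sub] using hi

instance isFiniteMeasure_restrict_smul_unitCube (μ : Measure (EuclideanSpace ℝ (Fin d)))
    [IsFiniteMeasureOnCompacts μ] (c : ℝ) : IsFiniteMeasure (μ.restrict (c • unitCube d)) :=
  isFiniteMeasure_restrict.2 ((isCompact_unitCube d).smul c).measure_lt_top.ne

lemma expectedColorable_smul_unitCube_le {k : ℕ} [NeZero k] {r : ℝ}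
    (μ : Measure (EuclideanSpace ℝ (Fin d))) [IsFiniteMeasureOnCompacts μ] [μ.IsAddLeftInvariant]
    {m : ℕ} [NeZero m] {s t : ℝ} (hs : 0 < s) (ht : 0 < t) (htm : t ≤ m * s) :
    expectedColorable k r (μ.restrict (t • unitCube d)) ≤
      m ^ d * expectedColorable k r (μ.restrict (s • unitCube d)) := by
  let corner (i : Fin d → Fin m) : EuclideanSpace ℝ (Fin d) :=
    WithLp.toLp 2 fun j => (i j : ℝ) * s
  have compact_cube (c : ℝ) : IsCompact (c • unitCube d) := (isCompact_unitCube d).smul c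
  have compact_tile (i) : IsCompact (corner i +ᵥ s • unitCube d) := (compact_cube s).vadd _
  have finite_tile (i) : IsFiniteMeasure (μ.restrict (corner i +ᵥ s • unitCube d)) :=
    isFiniteMeasure_restrict.2 (compact_tile i).measure_lt_top.ne
  calc expectedColorable k r (μ.restrict (t • unitCube d))
      ≤ ∑ i, expectedColorable k r (μ.restrict (corner i +ᵥ s • unitCube d)) :=
        expectedColorable_restrict_le_sum (compact_cube t).measurableSet
          (fun i => (compact_tile i).measurableSet) (smul_unitCube_subset_iUnion hs ht htm)
    _ = m ^ d * expectedColorable k r (μ.restrict (s • unitCube d)) := by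
        simp_rw [expectedColorable_restrict_vadd]
        simp

end Cubes

section EF

variable {d k : ℕ} [NeZero k]

lemma EH_eq_toReal_sampleLIntegral (r : ℝ) (n : ℕ) :
    EH d k r n =
      (sampleLIntegral (fun V => (maxColorable d k r V : ℝ≥0∞)) (uniformCube d) n).toReal := by
  rw [sampleLIntegral, ← integral_toReal (configMeasurable_maxColorable r n).aemeasurable
    (Eventually.of_forall fun _ => ENNReal.natCast_lt_top _)]
  simp_rw [ENNReal.toReal_natCast, EH]

lemma EF_eq_toReal_expectedColorable_uniformCube (lam t : ℝ) :
    EF d k lam t =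
      (expectedColorable k (1 / t) ((lam * t ^ d).toNNReal • uniformCube d)).toReal := by
  rw [expectedColorable,
    toReal_poissonLIntegral_smul fun V => Nat.cast_le.2 (maxColorable_le_card (1 / t) V)]
  simp_rw [← EH_eq_toReal_sampleLIntegral]
  rfl

lemma EF_eq_toReal_expectedColorable (lam : ℝ≥0) {t : ℝ} (ht : 0 < t) :
    EF d k lam t =
      (expectedColorable k 1 ((lam • volume).restrict (t • unitCube d))).toReal := by
  have : IsFiniteMeasure (volume.restrict (unitCube d)) :=
    isFiniteMeasure_restrict.2 (isCompact_unitCube d).measure_lt_top.ne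
  rw [EF_eq_toReal_expectedColorable_uniformCube, uniformCube,
    ← expectedColorable_restrict_smul lam ht, mul_one_div_cancel ht.ne']

theorem EF_subadditive_bound_general (d : ℕ) {k : ℕ} [NeZero k] (lam : ℝ≥0) {s t : ℝ} (hs : 0 < s)
    (ht : 0 < t) : EF d k lam t ≤ ((⌈t / s⌉ : ℤ) : ℝ) ^ d * EF d k lam s := by
  have : NeZero ⌈t / s⌉₊ := ⟨(Nat.ceil_pos.2 (div_pos ht hs)).ne'⟩
  have t_le : t ≤ ⌈t / s⌉₊ * s := (div_le_iff₀ hs).1 (Nat.le_ceil _)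
  let Φ (c : ℝ) : ℝ≥0∞ := expectedColorable k 1 ((lam • volume).restrict (c • unitCube d))
  calc EF d k lam t = (Φ t).toReal := EF_eq_toReal_expectedColorable lam ht
    _ ≤ (⌈t / s⌉₊ ^ d * Φ s).toReal := ENNReal.toReal_mono
        (ENNReal.mul_ne_top (ENNReal.pow_ne_top (ENNReal.natCast_ne_top _))
          expectedColorable_ne_top)
        (expectedColorable_smul_unitCube_le (lam • volume) hs ht t_le)
    _ = ((⌈t / s⌉ : ℤ) : ℝ) ^ d * EF d k lam s := by
        rw [ENNReal.toReal_mul, ENNReal.toReal_pow, ENNReal.toReal_natCast,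
          natCast_ceil_eq_intCast_ceil (div_pos ht hs).le, EF_eq_toReal_expectedColorable lam hs]

end EF

/-- subadditive expectation bound:
`E[F_{k,λ}(t)] ≤ ⌈t/s⌉^d E[F_{k,λ}(s)]` for `0 < s ≤ t`. -/
theorem EF_subadditive_bound (d k : ℕ) (hd : 1 ≤ d) (hk : 1 ≤ k) (lam : ℝ) (hlam : 0 < lam)
    (s t : ℝ) (hs : 0 < s) (hst : s ≤ t) :
    EF d k lam t ≤ ((⌈t / s⌉ : ℤ) : ℝ) ^ d * EF d k lam s :=
  have : NeZero k := ⟨Nat.one_le_iff_ne_zero.1 hk⟩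
  EF_subadditive_bound_general d ⟨lam, hlam.le⟩ hs (hs.trans_le hst)
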